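/- Let l ≥ 1 and k ≥ 0 be integers, ρ₀ > 0, and z ∈ ℂ with Re z ≥ 0. There exists a constant c > 0 such that for all R with ρ₀² < R ≤ ρ₀² + 1 and all a ≥ 1/2, ( ∫_{‖H‖ > a} ( Σ_{|α| ≤ 2k} |∂^α (ℱ^{−1} s_R^z)(H)| )² dH )^{1/2} ≤ c a^{−Re z − 1/2}. -/

import Mathlib

open Real MeasureTheory

/-- s_R^z(λ) = (1 − (ρ₀² + ‖λ‖²)/R)_+^z on ℝ^l. -/
noncomputable def sRz (l : ℕ) (ρ₀ R : ℝ) (z : ℂ) (lam : EuclideanSpace ℝ (Fin l)) : ℂ :=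
  if 0 < 1 - (ρ₀ ^ 2 + ‖lam‖ ^ 2) / R then
    ((1 - (ρ₀ ^ 2 + ‖lam‖ ^ 2) / R : ℝ) : ℂ) ^ z
  else 0

/-- The inverse Fourier transform (ℱ^{−1}g)(H) = (2π)^{−l} ∫_{ℝ^l} g(λ) e^{i⟨λ,H⟩} dλ. -/
noncomputable def invFT (l : ℕ) (g : EuclideanSpace ℝ (Fin l) → ℂ)
    (H : EuclideanSpace ℝ (Fin l)) : ℂ :=
  (((2 * Real.pi) ^ l : ℝ) : ℂ)⁻¹ *
    ∫ lam : EuclideanSpace ℝ (Fin l),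
      g lam * Complex.exp (Complex.I * ((inner ℝ lam H : ℝ) : ℂ))

/-- Iterated partial derivative of a function on ℝ^l along a list of coordinate directions. -/
noncomputable def mderiv {l : ℕ} : List (Fin l) → (EuclideanSpace ℝ (Fin l) → ℂ) →
    EuclideanSpace ℝ (Fin l) → ℂ
  | [], f => f
  | i :: L, f => fun x => fderiv ℝ (mderiv L f) x (EuclideanSpace.single i 1)

/-- The partial derivative ∂^α of a function on ℝ^l associated with the multi-index
α : Fin l → ℕ (α i derivatives in the i-th coordinate direction). -/
noncomputable def partialD {l : ℕ} (α : Fin l → ℕ) (f : EuclideanSpace ℝ (Fin l) → ℂ) :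
    EuclideanSpace ℝ (Fin l) → ℂ :=
  mderiv ((List.finRange l).flatMap fun i => List.replicate (α i) i) f

/-! Taking `∂^α` of `ℱ⁻¹ s` multiplies the symbol `s` by a monomial, and taking an `m`-th
difference of the symbol with step `h • eᵢ` multiplies its inverse transform by
`(exp (-i h Hᵢ) - 1) ^ m`. If `‖H‖ > a`, some coordinate satisfies `|Hᵢ| ≥ a / l`, and the mean of
`|exp (-i h Hᵢ) - 1| ^ (2 m)` over `0 < h ≤ 2 l / a` is then at least `1`. By Plancherel the `L²`
tail is therefore controlled by the `L²` norms of the `m`-th differences with steps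
`h ≤ 2 l / a`, and it is enough to bound these by a multiple of `h ^ (re z + 1 / 2)`.

Beneath the sphere bounding its support, at distance `d`, the symbol has size `d ^ (re z)` and
extends holomorphically along lines to a complex disc of radius `d / 2`. Cauchy's estimate bounds
its `m`-th difference by `h ^ (re z + 1) / (h + d)` as soon as `m ≥ re z + 1`, and the square of
this, integrated across the sphere, has order `h ^ (2 re z + 1)`.
-/

open Set Metric
open scoped ENNReal FourierTransform SchwartzMap fwdDiff InnerProductSpace

section ForwardDifference

variable {V E : Type*} [AddCommMonoid V] [NormedAddCommGroup E]

lemma fwdDiff_iter_eq_of_forall_eq {W A : Type*} [AddCommMonoid W] [AddCommGroup A] {f : V → A}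
    {g : W → A} {v x : V} {w y : W} {m : ℕ} (h : ∀ j ≤ m, f (x + j • v) = g (y + j • w)) :
    Δ_[v] ^[m] f x = Δ_[w] ^[m] g y := by
  simp_rw [fwdDiff_iter_eq_sum_shift]
  exact Finset.sum_congr rfl fun j hj => by rw [h j (Finset.mem_range_succ_iff.1 hj)]

lemma norm_fwdDiff_iter_le {f : V → E} {v x : V} {m : ℕ} {M : ℝ}
    (h : ∀ j ≤ m, ‖f (x + j • v)‖ ≤ M) : ‖Δ_[v] ^[m] f x‖ ≤ 2 ^ m * M := by
  induction m generalizing f M with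
  | zero => simpa using h 0 le_rfl
  | succ m ih =>
    rw [Function.iterate_succ_apply, pow_succ, mul_assoc]
    refine ih fun j hj => ?_
    rw [fwdDiff, add_assoc, ← succ_nsmul, two_mul]
    exact (norm_sub_le _ _).trans (add_le_add (h (j + 1) (by lia)) (h j (by lia)))

lemma norm_fwdDiff_iter_le_of_differentiableOn [NormedSpace ℂ E] {F : ℂ → E} {c h : ℂ}
    {ε δ M : ℝ} {m : ℕ} (hδ : ‖h‖ < δ) (hF : DifferentiableOn ℂ F (ball c (ε + m * δ)))
    (hM : ∀ w ∈ ball c (ε + m * δ), ‖F w‖ ≤ M) :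
    ∀ w ∈ ball c ε, ‖Δ_[h] ^[m] F w‖ ≤ (2 * ‖h‖ / δ) ^ m * M := by
  have hδ₀ : 0 < δ := (norm_nonneg h).trans_lt hδ
  induction m generalizing F M with
  | zero => simpa using hM
  | succ m ih =>
    have hsub : ∀ w ∈ ball c (ε + m * δ), ball w δ ⊆ ball c (ε + (m + 1 : ℕ) * δ) := by
      refine fun w hw => ball_subset_ball' ?_
      push_cast
      linarith [mem_ball.1 hw]
    have hadd : ∀ w : ℂ, w + h ∈ ball w δ := fun w => by simpa using hδ
    have hdiff : DifferentiableOn ℂ (Δ_[h] F) (ball c (ε + m * δ)) :=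
      (hF.comp (differentiable_id.add_const h).differentiableOn fun w hw => hsub w hw (hadd w)).sub
        (hF.mono fun w hw => hsub w hw (mem_ball_self hδ₀))
    have hbound : ∀ w ∈ ball c (ε + m * δ), ‖Δ_[h] F w‖ ≤ 2 * ‖h‖ / δ * M := by
      intro w hw
      have hmaps : MapsTo F (ball w δ) (closedBall (F w) (2 * M)) := fun u hu => by
        rw [mem_closedBall, dist_eq_norm, two_mul]
        exact (norm_sub_le _ _).trans
          (add_le_add (hM u (hsub w hw hu)) (hM w (hsub w hw (mem_ball_self hδ₀))))
      calc ‖Δ_[h] F w‖ = dist (F (w + h)) (F w) := (dist_eq_norm _ _).symm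
        _ ≤ 2 * M / δ * dist (w + h) w :=
          Complex.dist_le_div_mul_dist_of_mapsTo_ball (hF.mono (hsub w hw)) hmaps (hadd w)
        _ = 2 * ‖h‖ / δ * M := by rw [dist_self_add_left]; ring
    intro w hw
    rw [Function.iterate_succ_apply, pow_succ, mul_assoc]
    exact ih hdiff hbound w hw

lemma memLp_fwdDiff_iter {G : Type*} [AddCommGroup G] [MeasurableSpace G] [MeasurableAdd G]
    {μ : Measure G} [μ.IsAddRightInvariant] {p : ℝ≥0∞} {f : G → E} (hf : MemLp f p μ) (v : G)
    (m : ℕ) : MemLp (Δ_[v] ^[m] f) p μ := by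
  induction m generalizing f with
  | zero => exact hf
  | succ _ ih =>
    exact ih ((hf.comp_measurePreserving (measurePreserving_add_right μ v)).sub hf)

lemma eLpNorm_fwdDiff_iter_le {G : Type*} [AddCommGroup G] [MeasurableSpace G] [MeasurableAdd G]
    {μ : Measure G} [μ.IsAddRightInvariant] {p : ℝ≥0∞} (hp : 1 ≤ p) {f : G → E}
    (hf : AEStronglyMeasurable f μ) (v : G) (m : ℕ) :
    eLpNorm (Δ_[v] ^[m] f) p μ ≤ 2 ^ m * eLpNorm f p μ := by
  have hmp := measurePreserving_add_right μ v
  induction m generalizing f with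
  | zero => simp
  | succ m ih =>
    rw [Function.iterate_succ_apply, pow_succ, mul_assoc]
    refine (ih ((hf.comp_measurePreserving hmp).sub hf)).trans ?_
    gcongr
    calc eLpNorm (Δ_[v] f) p μ ≤ eLpNorm (f ∘ (· + v)) p μ + eLpNorm f p μ :=
          eLpNorm_sub_le (hf.comp_measurePreserving hmp) hf hp
      _ = 2 * eLpNorm f p μ := by rw [eLpNorm_comp_measurePreserving hf hmp, two_mul]

end ForwardDifference

section Plancherel

variable {V : Type*} [NormedAddCommGroup V] [MeasurableSpace V] [BorelSpace V]

lemma lintegral_comp_smul [NormedSpace ℝ V] [FiniteDimensional ℝ V] (μ : Measure V)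
    [μ.IsAddHaarMeasure] (f : V → ℝ≥0∞) {r : ℝ} (hr : r ≠ 0) :
    ∫⁻ x, f (r • x) ∂μ = ENNReal.ofReal |(r ^ Module.finrank ℝ V)⁻¹| * ∫⁻ x, f x ∂μ := by
  rw [← smul_eq_mul, ← lintegral_smul_measure, ← Measure.map_addHaar_smul μ hr]
  exact (lintegral_map_equiv f (Homeomorph.smulOfNeZero r hr).toMeasurableEquiv).symm

variable [InnerProductSpace ℝ V] [FiniteDimensional ℝ V] {g : V → ℂ}

lemma continuous_fourier (hg : Integrable g) : Continuous (𝓕 g) :=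
  VectorFourier.fourierIntegral_continuous continuous_fourierChar continuous_inner hg

lemma coeFn_fourier_toLp_ae_eq (hg : Integrable g) (hg₂ : MemLp g 2) :
    (𝓕 (hg₂.toLp g) : Lp (α := V) ℂ 2 volume) =ᵐ[volume] 𝓕 g := by
  refine ae_eq_of_integral_contDiff_smul_eq ((Lp.memLp _).locallyIntegrable (by norm_num))
    (continuous_fourier hg).locallyIntegrable fun φ hφ hφc => ?_
  obtain ⟨ψ, hψ⟩ : ∃ ψ : 𝓢(V, ℂ), ∀ x, ψ x = φ x :=
    ⟨(hφc.comp_left (g := ((↑) : ℝ → ℂ)) Complex.ofReal_zero).toSchwartzMap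
      (Complex.ofRealCLM.contDiff.comp hφ), fun _ => rfl⟩
  have hLp : ∫ x, (𝓕 ψ) x • hg₂.toLp g x =
      ∫ x, ψ x • (𝓕 (hg₂.toLp g) : Lp (α := V) ℂ 2 volume) x := by
    simpa [TemperedDistribution.fourier_apply, Lp.toTemperedDistribution_apply] using
      congrArg (fun T => T ψ) (Lp.fourier_toTemperedDistribution_eq (hg₂.toLp g))
  have hflip : ∫ x, 𝓕 g x • ψ x = ∫ x, g x • (𝓕 ψ) x := by
    simpa [flip_innerₗ] using! VectorFourier.integral_fourierIntegral_smul_eq_flip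
      (L := innerₗ V) continuous_fourierChar continuous_inner hg ψ.integrable
  calc ∫ x, φ x • (𝓕 (hg₂.toLp g) : Lp (α := V) ℂ 2 volume) x
      = ∫ x, ψ x • (𝓕 (hg₂.toLp g) : Lp (α := V) ℂ 2 volume) x := by simp [hψ]
    _ = ∫ x, (𝓕 ψ) x • hg₂.toLp g x := hLp.symm
    _ = ∫ x, g x • (𝓕 ψ) x := by
      refine integral_congr_ae ?_
      filter_upwards [hg₂.coeFn_toLp] with x hx
      rw [hx, smul_eq_mul, smul_eq_mul, mul_comm]
    _ = ∫ x, φ x • 𝓕 g x := by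
      simp_rw [← hflip, hψ, smul_eq_mul, Complex.real_smul, mul_comm]

lemma eLpNorm_fourier (hg : Integrable g) (hg₂ : MemLp g 2) :
    eLpNorm (𝓕 g) 2 = eLpNorm g 2 := by
  have hnorm : ‖𝓕 (hg₂.toLp g)‖ₑ = ‖hg₂.toLp g‖ₑ := by
    rw [← ofReal_norm, ← ofReal_norm, Lp.norm_fourier_eq]
  rwa [Lp.enorm_def, Lp.enorm_def, eLpNorm_congr_ae (coeFn_fourier_toLp_ae_eq hg hg₂),
    eLpNorm_congr_ae hg₂.coeFn_toLp] at hnorm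

end Plancherel

lemma eLpNorm_two_sq {α E : Type*} [MeasurableSpace α] [NormedAddCommGroup E] (f : α → E)
    (μ : Measure α) : eLpNorm f 2 μ ^ 2 = ∫⁻ x, ‖f x‖ₑ ^ 2 ∂μ := by
  simpa using eLpNorm_nnreal_pow_eq_lintegral (f := f) (μ := μ) (p := 2) two_ne_zero

section InvFT

variable {l : ℕ} {g : EuclideanSpace ℝ (Fin l) → ℂ}

lemma invFT_eq_fourier (g : EuclideanSpace ℝ (Fin l) → ℂ) (H : EuclideanSpace ℝ (Fin l)) :
    invFT l g H = (((2 * π) ^ l : ℝ) : ℂ)⁻¹ * 𝓕 g (-(2 * π)⁻¹ • H) := by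
  rw [invFT, Real.fourier_eq']
  congr 2 with x
  rw [smul_eq_mul, mul_comm, real_inner_smul_right, mul_comm Complex.I]
  congr 4
  field_simp

lemma continuous_invFT (hg : Integrable g) : Continuous (invFT l g) := by
  simp_rw [funext (invFT_eq_fourier g)]
  exact ((continuous_fourier hg).comp (continuous_const_smul _)).const_mul _

lemma lintegral_enorm_invFT_sq (hg : Integrable g) (hg₂ : MemLp g 2) :
    ∫⁻ H, ‖invFT l g H‖ₑ ^ 2 = ENNReal.ofReal ((2 * π) ^ l)⁻¹ * ∫⁻ x, ‖g x‖ₑ ^ 2 := by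
  have hplancherel : ∫⁻ x, ‖𝓕 g x‖ₑ ^ 2 = ∫⁻ x, ‖g x‖ₑ ^ 2 := by
    rw [← eLpNorm_two_sq, ← eLpNorm_two_sq, eLpNorm_fourier hg hg₂]
  have hpt (H) : ‖invFT l g H‖ₑ ^ 2 =
      ENNReal.ofReal (((2 * π) ^ l)⁻¹ ^ 2) * ‖𝓕 g (-(2 * π)⁻¹ • H)‖ₑ ^ 2 := by
    rw [invFT_eq_fourier, enorm_mul, mul_pow, ← ofReal_norm, norm_inv,
      Complex.norm_of_nonneg (by positivity), ENNReal.ofReal_pow (by positivity)]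
  have hjac : |((-(2 * π)⁻¹) ^ l)⁻¹| = (2 * π) ^ l := by
    rw [abs_inv, abs_pow, abs_neg, abs_inv, abs_of_pos two_pi_pos, inv_pow, inv_inv]
  simp_rw [hpt]
  rw [lintegral_const_mul' _ _ ENNReal.ofReal_ne_top,
    lintegral_comp_smul volume (fun x => ‖𝓕 g x‖ₑ ^ 2) (by simp [pi_ne_zero]),
    finrank_euclideanSpace_fin, hjac, hplancherel, ← mul_assoc,
    ← ENNReal.ofReal_mul (by positivity)]
  congr 2
  field_simp

lemma fderiv_invFT (hg : Integrable g) (hg₁ : Integrable fun x => ‖x‖ * ‖g x‖)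
    (H v : EuclideanSpace ℝ (Fin l)) :
    fderiv ℝ (invFT l g) H v = invFT l (fun x => Complex.I * ⟪x, v⟫_ℝ * g x) H := by
  set s : ℝ := -(2 * π)⁻¹ with hs
  have hderiv : HasFDerivAt (invFT l g) ((((2 * π) ^ l : ℝ) : ℂ)⁻¹ •
      (𝓕 (VectorFourier.fourierSMulRight (innerSL ℝ) g) (s • H)).comp
        (s • ContinuousLinearMap.id ℝ _)) H := by
    simp_rw [funext (invFT_eq_fourier g)]
    exact ((Real.hasFDerivAt_fourier hg hg₁ (s • H)).comp H
      ((hasFDerivAt_id H).const_smul s)).const_mul _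
  have hint : Integrable (VectorFourier.fourierSMulRight (innerSL ℝ) g) :=
    (hg₁.const_mul (2 * π * ‖innerSL ℝ‖)).mono' hg.1.fourierSMulRight
      (.of_forall fun x => by
        rw [← mul_assoc]; exact VectorFourier.norm_fourierSMulRight_le _ g x)
  have hpt (x) : VectorFourier.fourierSMulRight (innerSL ℝ) g x (s • v) =
      Complex.I * ⟪x, v⟫_ℝ * g x := by
    rw [VectorFourier.fourierSMulRight_apply, innerSL_apply_apply, real_inner_smul_right, hs]
    simp
    field_simp
  rw [hderiv.fderiv, invFT_eq_fourier, ← hs]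
  simp only [_root_.smul_apply, ContinuousLinearMap.comp_apply, ContinuousLinearMap.id_apply,
    smul_eq_mul]
  simp_rw [Real.fourier_continuousLinearMap_apply hint, hpt]

lemma norm_prod_I_mul_coord_le (L : List (Fin l)) (x : EuclideanSpace ℝ (Fin l)) :
    ‖(L.map fun i => Complex.I * x i).prod‖ ≤ ‖x‖ ^ L.length := by
  induction L with
  | nil => simp
  | cons i L ih =>
    rw [List.map_cons, List.prod_cons, List.length_cons, pow_succ', norm_mul, norm_mul,
      Complex.norm_I, one_mul, Complex.norm_real]
    exact mul_le_mul (PiLp.norm_apply_le x i) ih (norm_nonneg _) (norm_nonneg _)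

lemma mderiv_invFT (hm : AEStronglyMeasurable g)
    (hg : ∀ n : ℕ, Integrable fun x => ‖x‖ ^ n * ‖g x‖) (L : List (Fin l)) :
    mderiv L (invFT l g) = invFT l fun x => (L.map fun i => Complex.I * x i).prod * g x := by
  have hmeas (L : List (Fin l)) :
      AEStronglyMeasurable fun x => (L.map fun i => Complex.I * x i).prod * g x :=
    (continuous_list_prod L fun i _ => by fun_prop).aestronglyMeasurable.mul hm
  have hprod (L : List (Fin l)) (n : ℕ) :
      Integrable fun x => ‖x‖ ^ n * ‖(L.map fun i => Complex.I * x i).prod * g x‖ := by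
    refine (hg (n + L.length)).mono' (by fun_prop) (.of_forall fun x => ?_)
    rw [norm_mul, norm_norm, norm_mul, norm_pow, norm_norm, pow_add, mul_assoc]
    gcongr
    exact norm_prod_I_mul_coord_le L x
  induction L with
  | nil => simp [mderiv]
  | cons i L ih =>
    ext H
    have h₀ : Integrable fun x => (L.map fun i => Complex.I * x i).prod * g x :=
      (integrable_norm_iff (hmeas L)).1 (by simpa only [pow_zero, one_mul] using hprod L 0)
    have h₁ := hprod L 1
    simp only [pow_one] at h₁
    simp only [mderiv, ih, fderiv_invFT h₀ h₁]
    simp [mul_assoc, EuclideanSpace.inner_single_right]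

lemma invFT_fwdDiff (hg : Integrable g) (v H : EuclideanSpace ℝ (Fin l)) :
    invFT l (Δ_[v] g) H = (Complex.exp (-Complex.I * ⟪v, H⟫_ℝ) - 1) * invFT l g H := by
  set e : EuclideanSpace ℝ (Fin l) → ℂ := fun x => g x * Complex.exp (Complex.I * ⟪x, H⟫_ℝ) with he
  have hi : Integrable e := hg.mul_bdd (c := 1) (by fun_prop) (.of_forall fun x => by
    rw [mul_comm, Complex.norm_exp_ofReal_mul_I])
  have hshift (x) : Δ_[v] g x * Complex.exp (Complex.I * ⟪x, H⟫_ℝ) =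
      Complex.exp (-Complex.I * ⟪v, H⟫_ℝ) * e (x + v) - e x := by
    simp only [fwdDiff, he]
    rw [inner_add_left, sub_mul, mul_left_comm, ← Complex.exp_add]
    congr 3
    push_cast
    ring
  simp_rw [invFT, hshift]
  rw [integral_sub ((hi.comp_add_right v).const_mul _) hi, integral_const_mul,
    integral_add_right_eq_self e v]
  ring

lemma invFT_fwdDiff_iter (hg : Integrable g) (v H : EuclideanSpace ℝ (Fin l)) (m : ℕ) :
    invFT l (Δ_[v] ^[m] g) H = (Complex.exp (-Complex.I * ⟪v, H⟫_ℝ) - 1) ^ m * invFT l g H := by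
  induction m generalizing g with
  | zero => simp
  | succ m ih =>
    have hΔ : Integrable (Δ_[v] g) := (hg.comp_add_right v).sub hg
    rw [Function.iterate_succ_apply, ih hΔ, invFT_fwdDiff hg, pow_succ, mul_assoc]

lemma measurable_invFT (hg : Measurable g) : Measurable (invFT l g) := by
  refine Measurable.const_mul (StronglyMeasurable.integral_prod_right' (f := fun p =>
    g p.2 * Complex.exp (Complex.I * ⟪p.2, p.1⟫_ℝ)) ?_).measurable _
  fun_prop

lemma measurable_mderiv (hg : Measurable g) (L : List (Fin l)) : Measurable (mderiv L g) := by
  cases L with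
  | nil => exact hg
  | cons i L => exact measurable_fderiv_apply_const ℝ _ _

end InvFT

section FourierTail

lemma norm_exp_neg_I_mul_sub_one_sq (θ : ℝ) :
    ‖Complex.exp (-Complex.I * θ) - 1‖ ^ 2 = 2 - 2 * cos θ := by
  have hθ : -Complex.I * θ = Complex.I * (-θ : ℝ) := by push_cast; ring
  rw [hθ, Complex.norm_exp_I_mul_ofReal_sub_one, norm_eq_abs, sq_abs, mul_pow, sin_sq_eq_half_sub,
    mul_div_cancel₀ _ two_ne_zero, cos_neg]
  ring

lemma le_integral_two_sub_two_mul_cos {T y : ℝ} (hT : 0 < T) (hy : 2 ≤ T * |y|) :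
    T ≤ ∫ h in 0..T, (2 - 2 * cos (h * y)) := by
  have hy₀ : 0 < |y| := pos_of_mul_pos_right (two_pos.trans_le hy) hT.le
  have hcos : ∫ h in 0..T, cos (h * y) = sin (T * y) / y := by
    rw [intervalIntegral.integral_comp_mul_right _ (abs_pos.1 hy₀), integral_cos]
    simp [div_eq_inv_mul]
  have hsin : sin (T * y) / y ≤ T / 2 := by
    refine (le_abs_self _).trans ?_
    rw [abs_div, div_le_iff₀ hy₀]
    linarith [abs_sin_le_one (T * y)]
  rw [intervalIntegral.integral_sub (by simp) (Continuous.intervalIntegrable (by fun_prop) _ _),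
    intervalIntegral.integral_const_mul, hcos, intervalIntegral.integral_const, sub_zero,
    smul_eq_mul]
  linarith

lemma le_integral_pow_of_le_integral {q : ℝ → ℝ} (hq : Continuous q) (hq₁ : ∀ h, -1 ≤ q h) {T : ℝ}
    (hT : 0 ≤ T) (h : T ≤ ∫ h in 0..T, q h) (m : ℕ) : T ≤ ∫ h in 0..T, q h ^ m := by
  have hint {f : ℝ → ℝ} (hf : Continuous f) : IntervalIntegrable f volume 0 T :=
    hf.intervalIntegrable 0 T
  calc T ≤ T + m * ((∫ h in 0..T, q h) - T) :=
        le_add_of_nonneg_right (mul_nonneg m.cast_nonneg (sub_nonneg.2 h))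
    _ = ∫ h in 0..T, (1 + m * (q h - 1)) := by
        rw [intervalIntegral.integral_add (hint (by fun_prop)) (hint (by fun_prop)),
          intervalIntegral.integral_const_mul,
          intervalIntegral.integral_sub (hint hq) (hint (by fun_prop))]
        simp
    _ ≤ ∫ h in 0..T, q h ^ m :=
        intervalIntegral.integral_mono_on hT (hint (by fun_prop)) (hint (by fun_prop))
          fun h _ => one_add_mul_sub_le_pow (hq₁ h) m

lemma le_integral_norm_exp_sub_one_pow_sq {T y : ℝ} (hT : 0 < T) (hy : 2 ≤ T * |y|) (m : ℕ) :
    T ≤ ∫ h in 0..T, ‖(Complex.exp (-Complex.I * (h * y : ℝ)) - 1) ^ m‖ ^ 2 := by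
  simp_rw [norm_pow, ← pow_mul, mul_comm m, pow_mul, norm_exp_neg_I_mul_sub_one_sq]
  exact le_integral_pow_of_le_integral (by fun_prop) (fun h => by linarith [cos_le_one (h * y)])
    hT.le (le_integral_two_sub_two_mul_cos hT hy) m

lemma norm_le_sum_abs {ι : Type*} [Fintype ι] (x : EuclideanSpace ℝ ι) : ‖x‖ ≤ ∑ i, |x i| := by
  classical
  conv_lhs => rw [← (EuclideanSpace.basisFun ι ℝ).sum_repr x]
  refine (norm_sum_le _ _).trans (Finset.sum_le_sum fun i _ => ?_)
  simp [norm_smul]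

variable {l : ℕ} {g : EuclideanSpace ℝ (Fin l) → ℂ}

lemma ofReal_mul_setLIntegral_invFT_le (hg : Integrable g) (hg₂ : MemLp g 2)
    (v : EuclideanSpace ℝ (Fin l)) {T : ℝ} (hT : 0 < T) (m : ℕ) :
    ENNReal.ofReal T * ∫⁻ H in {H | 2 ≤ T * |⟪v, H⟫_ℝ|}, ‖invFT l g H‖ₑ ^ 2 ≤
      ENNReal.ofReal ((2 * π) ^ l)⁻¹ *
        ∫⁻ h in Ioc 0 T, ∫⁻ x, ‖Δ_[h • v] ^[m] g x‖ₑ ^ 2 := by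
  let E (h : ℝ) (H : EuclideanSpace ℝ (Fin l)) : ℂ :=
    (Complex.exp (-Complex.I * (h * ⟪v, H⟫_ℝ : ℝ)) - 1) ^ m
  have hE (H) (hH : H ∈ {H | 2 ≤ T * |⟪v, H⟫_ℝ|}) :
      ENNReal.ofReal T ≤ ∫⁻ h in Ioc 0 T, ‖E h H‖ₑ ^ 2 := by
    refine (ENNReal.ofReal_le_ofReal (le_integral_norm_exp_sub_one_pow_sq hT hH m)).trans_eq ?_
    rw [intervalIntegral.integral_of_le hT.le, ofReal_integral_eq_lintegral_ofReal
      (Continuous.integrableOn_Ioc (by fun_prop)) (.of_forall fun h => sq_nonneg _)]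
    simp_rw [ENNReal.ofReal_pow (norm_nonneg _), ofReal_norm]
    rfl
  have hplancherel (h : ℝ) : ∫⁻ H, ‖E h H * invFT l g H‖ₑ ^ 2 =
      ENNReal.ofReal ((2 * π) ^ l)⁻¹ * ∫⁻ x, ‖Δ_[h • v] ^[m] g x‖ₑ ^ 2 := by
    rw [← lintegral_enorm_invFT_sq (memLp_one_iff_integrable.1
      (memLp_fwdDiff_iter (memLp_one_iff_integrable.2 hg) _ m)) (memLp_fwdDiff_iter hg₂ _ m)]
    simp_rw [invFT_fwdDiff_iter hg, real_inner_smul_left]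
    rfl
  calc ENNReal.ofReal T * ∫⁻ H in {H | 2 ≤ T * |⟪v, H⟫_ℝ|}, ‖invFT l g H‖ₑ ^ 2
      ≤ ∫⁻ H in {H | 2 ≤ T * |⟪v, H⟫_ℝ|}, ∫⁻ h in Ioc 0 T, ‖E h H * invFT l g H‖ₑ ^ 2 := by
        rw [← lintegral_const_mul' _ _ ENNReal.ofReal_ne_top]
        refine setLIntegral_mono' (measurableSet_le (by fun_prop) (by fun_prop)) fun H hH => ?_
        simp_rw [enorm_mul, mul_pow]
        rw [lintegral_mul_const' _ _ (by simp)]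
        gcongr
        exact hE H hH
    _ ≤ ∫⁻ H, ∫⁻ h in Ioc 0 T, ‖E h H * invFT l g H‖ₑ ^ 2 := setLIntegral_le_lintegral _ _
    _ = ∫⁻ h in Ioc 0 T, ∫⁻ H, ‖E h H * invFT l g H‖ₑ ^ 2 := by
        refine lintegral_lintegral_swap (Continuous.aemeasurable ?_)
        have := continuous_invFT hg
        fun_prop
    _ = _ := by
        simp_rw [hplancherel]
        rw [lintegral_const_mul' _ _ ENNReal.ofReal_ne_top]

lemma setLIntegral_invFT_le_of_fwdDiff_le (hg : Integrable g) (hg₂ : MemLp g 2)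
    (v : EuclideanSpace ℝ (Fin l)) {T : ℝ} (hT : 0 < T) {m : ℕ} {C : ℝ≥0∞}
    (hΔ : ∀ h ∈ Ioc 0 T, ∫⁻ x, ‖Δ_[h • v] ^[m] g x‖ₑ ^ 2 ≤ C) :
    ∫⁻ H in {H | 2 ≤ T * |⟪v, H⟫_ℝ|}, ‖invFT l g H‖ₑ ^ 2 ≤
      ENNReal.ofReal ((2 * π) ^ l)⁻¹ * C := by
  refine (ENNReal.mul_le_mul_iff_right (ENNReal.ofReal_pos.2 hT).ne' ENNReal.ofReal_ne_top).1 ?_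
  calc ENNReal.ofReal T * ∫⁻ H in {H | 2 ≤ T * |⟪v, H⟫_ℝ|}, ‖invFT l g H‖ₑ ^ 2
      ≤ _ := ofReal_mul_setLIntegral_invFT_le hg hg₂ v hT m
    _ ≤ ENNReal.ofReal ((2 * π) ^ l)⁻¹ * ∫⁻ _ in Ioc 0 T, C :=
        mul_le_mul_right (setLIntegral_mono' measurableSet_Ioc hΔ) _
    _ = ENNReal.ofReal T * (ENNReal.ofReal ((2 * π) ^ l)⁻¹ * C) := by
        rw [setLIntegral_const, volume_Ioc, sub_zero, ← mul_assoc, mul_comm]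

lemma setOf_lt_norm_subset_iUnion {a : ℝ} (ha : 0 < a) :
    {H : EuclideanSpace ℝ (Fin l) | a < ‖H‖} ⊆
      ⋃ i, {H | 2 ≤ 2 * l / a * |⟪EuclideanSpace.single i 1, H⟫_ℝ|} := by
  intro H hH
  by_contra! hcon
  simp only [mem_iUnion, Set.mem_ofPred_eq, not_exists, not_le,
    EuclideanSpace.inner_single_left, map_one, one_mul] at hcon
  refine (show a < ‖H‖ from hH).not_ge ?_
  calc ‖H‖ ≤ ∑ i, |H i| := norm_le_sum_abs H
    _ ≤ ∑ _i : Fin l, a / l := by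
      gcongr with i
      have := hcon i
      rw [div_mul_eq_mul_div, div_lt_iff₀ ha] at this
      rw [le_div_iff₀ (Nat.cast_pos.2 i.pos)]
      linarith
    _ = a * (l / l) := by
      rw [Finset.sum_const, Finset.card_univ, Fintype.card_fin, nsmul_eq_mul, mul_div_left_comm]
    _ ≤ a := mul_le_of_le_one_right ha.le (div_self_le_one _)

lemma setLIntegral_invFT_norm_gt_le_of_fwdDiff_le (hg : Integrable g) (hg₂ : MemLp g 2) {A s : ℝ}
    (hA : 0 ≤ A) (hs : 0 ≤ s) {m : ℕ} (hΔ : ∀ (i : Fin l) (h : ℝ), 0 < h →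
      ∫⁻ x, ‖Δ_[h • EuclideanSpace.single i 1] ^[m] g x‖ₑ ^ 2 ≤ ENNReal.ofReal (A * h ^ s))
    {a : ℝ} (ha : 0 < a) :
    ∫⁻ H in {H : EuclideanSpace ℝ (Fin l) | a < ‖H‖}, ‖invFT l g H‖ₑ ^ 2 ≤
      ENNReal.ofReal (l * (((2 * π) ^ l)⁻¹ * (A * (2 * l / a) ^ s))) := by
  calc ∫⁻ H in {H : EuclideanSpace ℝ (Fin l) | a < ‖H‖}, ‖invFT l g H‖ₑ ^ 2
      ≤ ∑ i, ∫⁻ H in {H | 2 ≤ 2 * l / a * |⟪EuclideanSpace.single i 1, H⟫_ℝ|},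
          ‖invFT l g H‖ₑ ^ 2 := (lintegral_mono_set (setOf_lt_norm_subset_iUnion ha)).trans
            ((lintegral_iUnion_le _ _).trans_eq (tsum_fintype _))
    _ ≤ ∑ _i : Fin l, ENNReal.ofReal (((2 * π) ^ l)⁻¹ * (A * (2 * l / a) ^ s)) := by
        refine Finset.sum_le_sum fun i _ => ?_
        have hl : (0 : ℝ) < l := Nat.cast_pos.2 i.pos
        rw [ENNReal.ofReal_mul (by positivity)]
        refine setLIntegral_invFT_le_of_fwdDiff_le hg hg₂ _ (by positivity) (m := m) fun h hh => ?_
        refine (hΔ i h hh.1).trans (ENNReal.ofReal_le_ofReal ?_)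
        gcongr
        exacts [hh.1.le, hh.2]
    _ = _ := by rw [Finset.sum_const, Finset.card_univ, Fintype.card_fin,
        ENNReal.ofReal_mul l.cast_nonneg, ENNReal.ofReal_natCast, nsmul_eq_mul]

end FourierTail

section RadialIntegral

variable {V : Type*} [NormedAddCommGroup V] [NormedSpace ℝ V] [FiniteDimensional ℝ V]
  [Nontrivial V] [MeasurableSpace V] [BorelSpace V]

lemma setLIntegral_closedBall_comp_norm_le (μ : Measure V) [μ.IsAddHaarMeasure] {φ : ℝ → ℝ}
    (hφ₀ : ∀ y, 0 ≤ φ y) (hφ : Integrable φ) (K : ℝ) :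
    ∫⁻ x in closedBall 0 K, ENNReal.ofReal (φ ‖x‖) ∂μ ≤
      ENNReal.ofReal (Module.finrank ℝ V * μ.real (ball 0 1) *
        (K ^ (Module.finrank ℝ V - 1) * ∫ y, φ y)) := by
  rcases lt_or_ge K 0 with hK | hK
  · simp [closedBall_eq_empty.2 hK]
  set n := Module.finrank ℝ V
  set f : ℝ → ℝ := (Iic K).indicator φ
  have hf (y) : 0 ≤ f y := indicator_nonneg (fun y _ => hφ₀ y) y
  have hle (y) (hy : y ∈ Ioi 0) : y ^ (n - 1) * f y ≤ K ^ (n - 1) * φ y := by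
    by_cases hyK : y ∈ Iic K
    · have hy₀ : 0 ≤ y := (mem_Ioi.1 hy).le
      rw [show f y = φ y from indicator_of_mem hyK φ]
      gcongr
      exacts [hφ₀ y, hyK]
    · rw [show f y = 0 from indicator_of_notMem hyK φ, mul_zero]
      exact mul_nonneg (pow_nonneg hK _) (hφ₀ y)
  have hint : IntegrableOn (fun y => y ^ (n - 1) * f y) (Ioi 0) := by
    refine (hφ.const_mul (K ^ (n - 1))).integrableOn.mono' ?_
      ((ae_restrict_iff' measurableSet_Ioi).2 (.of_forall fun y hy => ?_))
    · exact ((continuous_pow _).aestronglyMeasurable.mul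
        (hφ.indicator measurableSet_Iic).aestronglyMeasurable).restrict
    · rw [norm_of_nonneg (mul_nonneg (pow_nonneg (mem_Ioi.1 hy).le _) (hf y))]
      exact hle y hy
  have hint' : Integrable (fun x => f ‖x‖) μ := (integrable_fun_norm_addHaar μ).2 hint
  calc ∫⁻ x in closedBall 0 K, ENNReal.ofReal (φ ‖x‖) ∂μ
      = ∫⁻ x, ENNReal.ofReal (f ‖x‖) ∂μ := by
        rw [← lintegral_indicator measurableSet_closedBall]
        congr with x
        by_cases hx : ‖x‖ ≤ K <;> simp [f, indicator, hx]
    _ = ENNReal.ofReal (n * μ.real (ball 0 1) * ∫ y in Ioi 0, y ^ (n - 1) * f y) := by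
        rw [← ofReal_integral_eq_lintegral_ofReal hint' (.of_forall fun x => hf _),
          integral_fun_norm_addHaar μ f]
        simp only [smul_eq_mul, nsmul_eq_mul, mul_assoc, n]
    _ ≤ ENNReal.ofReal (n * μ.real (ball 0 1) * (K ^ (n - 1) * ∫ y, φ y)) := by
        refine ENNReal.ofReal_le_ofReal (mul_le_mul_of_nonneg_left ?_ (by positivity))
        rw [← integral_const_mul]
        exact (setIntegral_mono_on hint (hφ.const_mul _).integrableOn measurableSet_Ioi hle).trans
          (setIntegral_le_integral (hφ.const_mul _)
            (.of_forall fun y => mul_nonneg (pow_nonneg hK _) (hφ₀ y)))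

lemma setLIntegral_closedBall_inv_one_add_sq_le (μ : Measure V) [μ.IsAddHaarMeasure] (r : ℝ)
    {h : ℝ} (hh : 0 < h) (K : ℝ) :
    ∫⁻ x in closedBall 0 K, ENNReal.ofReal (1 + ((‖x‖ - r) / h) ^ 2)⁻¹ ∂μ ≤
      ENNReal.ofReal (Module.finrank ℝ V * μ.real (ball 0 1) *
        (K ^ (Module.finrank ℝ V - 1) * (h * π))) := by
  have hπ : ∫ y, (1 + ((y - r) / h) ^ 2)⁻¹ = h * π := by
    rw [integral_sub_right_eq_self (fun y : ℝ => (1 + (y / h) ^ 2)⁻¹) r,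
      Measure.integral_comp_div (fun y : ℝ => (1 + y ^ 2)⁻¹) h, integral_univ_inv_one_add_sq,
      abs_of_pos hh, smul_eq_mul]
  rw [← hπ]
  exact setLIntegral_closedBall_comp_norm_le μ (fun y => by positivity)
    ((integrable_inv_one_add_sq.comp_div hh.ne').comp_sub_right r) K

end RadialIntegral

section LineExtension

lemma sq_le_of_mul_add_abs_le {t c d h : ℝ} (ht : 0 ≤ t) (hh : 0 < h)
    (hc : t * (h + |d|) ≤ c * h) : t ^ 2 ≤ c ^ 2 * (1 + (d / h) ^ 2)⁻¹ := by
  rw [← div_eq_mul_inv, le_div_iff₀ (by positivity), ← mul_le_mul_iff_left₀ (sq_pos_of_pos hh)]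
  calc t ^ 2 * (1 + (d / h) ^ 2) * h ^ 2 = t ^ 2 * (h ^ 2 + |d| ^ 2) := by
        rw [sq_abs]; field_simp
    _ ≤ t ^ 2 * (h + |d|) ^ 2 := by gcongr; nlinarith [abs_nonneg d]
    _ = (t * (h + |d|)) ^ 2 := by ring
    _ ≤ (c * h) ^ 2 := by gcongr
    _ = c ^ 2 * h ^ 2 := by ring

lemma norm_nsmul_smul_le {V : Type*} [NormedAddCommGroup V] [NormedSpace ℝ V] {v : V}
    (hv : ‖v‖ = 1) {h : ℝ} (hh : 0 ≤ h) {j m : ℕ} (hj : j ≤ m) : ‖j • h • v‖ ≤ m * h := by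
  rw [← Nat.cast_smul_eq_nsmul ℝ, norm_smul, norm_smul, hv, mul_one, norm_natCast,
    norm_of_nonneg hh]
  gcongr

/-- `HasLineExtension v r B σ g` expresses that `g` is supported in the ball of radius `r` around
the origin and that, at each point `x` of that ball, its restriction to the line `x + ℝ v` extends
holomorphically to a complex disc of radius comparable to the distance `r - ‖x‖` to the sphere,
with the bound `B * (r - ‖x‖) ^ σ`. It abstracts the behaviour of the Bochner–Riesz symbols
`(1 - ‖x‖ ^ 2) ^ z` with `re z = σ`, and is stable under multiplication by linear functions. -/
structure HasLineExtension {V : Type*} [NormedAddCommGroup V] [NormedSpace ℝ V] (v : V)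
    (r B σ : ℝ) (g : V → ℂ) : Prop where
  nonneg : 0 ≤ B
  eq_zero : ∀ ⦃x⦄, r ≤ ‖x‖ → g x = 0
  exists_extension : ∀ ⦃x⦄, ‖x‖ < r → ∃ F : ℂ → ℂ,
    DifferentiableOn ℂ F (ball 0 ((r - ‖x‖) / 2)) ∧
    (∀ w ∈ ball (0 : ℂ) ((r - ‖x‖) / 2), ‖F w‖ ≤ B * (r - ‖x‖) ^ σ) ∧
    ∀ t : ℝ, |t| < (r - ‖x‖) / 2 → g (x + t • v) = F t

namespace HasLineExtension

variable {V : Type*} [NormedAddCommGroup V] [NormedSpace ℝ V] {v x : V} {r B σ h : ℝ} {g : V → ℂ}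
  {m : ℕ}

lemma norm_le (hg : HasLineExtension v r B σ g) (hx : ‖x‖ < r) : ‖g x‖ ≤ B * (r - ‖x‖) ^ σ := by
  obtain ⟨F, -, hFB, hF⟩ := hg.exists_extension hx
  have hd : 0 < (r - ‖x‖) / 2 := half_pos (sub_pos.2 hx)
  have hgx := hF 0 (by simpa using hd)
  rw [zero_smul, add_zero, Complex.ofReal_zero] at hgx
  exact hgx ▸ hFB 0 (mem_ball_self hd)

lemma norm_le_of_sub_norm_le (hg : HasLineExtension v r B σ g) (hσ : 0 ≤ σ) {d : ℝ} (hd₀ : 0 ≤ d)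
    (hd : r - ‖x‖ ≤ d) : ‖g x‖ ≤ B * d ^ σ := by
  have hB := hg.nonneg
  rcases le_or_gt r ‖x‖ with hx | hx
  · rw [hg.eq_zero hx, norm_zero]
    positivity
  · refine (hg.norm_le hx).trans ?_
    gcongr

lemma mul_left (hg : HasLineExtension v r B σ g) (hv : ‖v‖ = 1) (hr : 0 ≤ r) (φ : V →ₗ[ℝ] ℂ)
    (hφ : ∀ y, ‖φ y‖ ≤ ‖y‖) : HasLineExtension v r (r * B) σ fun x => φ x * g x where
  nonneg := mul_nonneg hr hg.nonneg
  eq_zero x hx := by rw [hg.eq_zero hx, mul_zero]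
  exists_extension x hx := by
    obtain ⟨F, hFd, hFB, hF⟩ := hg.exists_extension hx
    refine ⟨fun w => (φ x + w * φ v) * F w, ?_, fun w hw => ?_, fun t ht => ?_⟩
    · exact DifferentiableOn.mul (by fun_prop) hFd
    · have hw' : ‖w‖ < (r - ‖x‖) / 2 := mem_ball_zero_iff.1 hw
      have hφw : ‖φ x + w * φ v‖ ≤ r := calc
        ‖φ x + w * φ v‖ ≤ ‖x‖ + ‖w‖ * ‖v‖ := by
          refine (norm_add_le _ _).trans (add_le_add (hφ x) ?_)
          rw [norm_mul]
          gcongr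
          exact hφ v
        _ ≤ r := by rw [hv]; linarith
      rw [norm_mul, mul_assoc]
      exact mul_le_mul hφw (hFB w hw) (norm_nonneg _) hr
    · simp [hF t ht]

lemma fwdDiff_iter_eq_zero (hg : HasLineExtension v r B σ g) (hv : ‖v‖ = 1) (hh : 0 ≤ h)
    (hx : r + m * h ≤ ‖x‖) : Δ_[h • v] ^[m] g x = 0 := by
  refine norm_le_zero_iff.1 ((norm_fwdDiff_iter_le (M := 0) fun j hj => ?_).trans_eq (mul_zero _))
  rw [hg.eq_zero, norm_zero]
  linarith [norm_le_add_norm_add x (j • h • v), norm_nsmul_smul_le hv hh hj]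

lemma norm_fwdDiff_iter_le (hg : HasLineExtension v r B σ g) (hv : ‖v‖ = 1) (hσ : 0 ≤ σ)
    (hh : 0 ≤ h) {d : ℝ} (hd₀ : 0 ≤ d) (hd : r - ‖x‖ ≤ d) :
    ‖Δ_[h • v] ^[m] g x‖ ≤ 2 ^ m * (B * (d + m * h) ^ σ) := by
  refine _root_.norm_fwdDiff_iter_le fun j hj =>
    hg.norm_le_of_sub_norm_le hσ (by positivity) ?_
  linarith [norm_le_add_norm_add x (j • h • v), norm_nsmul_smul_le hv hh hj]

-- At depth `d = r - ‖x‖` beneath the sphere each difference gains a factor `h / d` by Cauchy's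
-- estimate, and `m ≥ σ + 1` of them turn `d ^ σ` into `h ^ (σ + 1) / d`.
lemma norm_fwdDiff_iter_mul_le_of_lt (hg : HasLineExtension v r B σ g) (hm : σ + 1 ≤ m) (hh : 0 < h)
    (hx : 2 * (m + 1) * h < r - ‖x‖) :
    ‖Δ_[h • v] ^[m] g x‖ * (r - ‖x‖) ≤ (4 * (m + 1)) ^ m * B * h ^ (σ + 1) := by
  set d := r - ‖x‖
  have hd : 0 < d := lt_trans (by positivity) hx
  obtain ⟨F, hFd, hFB, hF⟩ := hg.exists_extension (sub_pos.1 hd)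
  have hB := hg.nonneg
  have hδ : h < d / (2 * (m + 1)) := by rwa [lt_div_iff₀' (by positivity)]
  have hradius : d / (2 * (m + 1)) + m * (d / (2 * (m + 1))) = d / 2 := by field_simp; ring
  have hΔ : Δ_[h • v] ^[m] g x = Δ_[(h : ℂ)] ^[m] F 0 := by
    refine fwdDiff_iter_eq_of_forall_eq fun j hj => ?_
    have hjh : |j * h| < d / 2 := by
      rw [abs_of_nonneg (by positivity), ← hradius]
      have : (j * h : ℝ) ≤ m * (d / (2 * (m + 1))) := by gcongr
      linarith
    simpa [mul_smul, ← Nat.cast_smul_eq_nsmul ℝ] using hF _ hjh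
  have hcauchy : ‖Δ_[(h : ℂ)] ^[m] F 0‖ ≤ (2 * h / (d / (2 * (m + 1)))) ^ m * (B * d ^ σ) := by
    have := norm_fwdDiff_iter_le_of_differentiableOn (h := (h : ℂ)) (ε := d / (2 * (m + 1)))
      (by rwa [Complex.norm_of_nonneg hh.le]) (hradius ▸ hFd) (hradius ▸ hFB) 0
      (mem_ball_self (hh.trans hδ))
    rwa [Complex.norm_of_nonneg hh.le] at this
  have hexp : (h / d) ^ m ≤ (h / d) ^ (σ + 1) := by
    rw [← rpow_natCast]
    refine rpow_le_rpow_of_exponent_ge (by positivity) ((div_le_one hd).2 ?_) hm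
    nlinarith [(m.cast_nonneg : (0 : ℝ) ≤ m)]
  calc ‖Δ_[h • v] ^[m] g x‖ * d
      ≤ (2 * h / (d / (2 * (m + 1)))) ^ m * (B * d ^ σ) * d := by rw [hΔ]; gcongr
    _ = (4 * (m + 1)) ^ m * B * ((h / d) ^ m * d ^ (σ + 1)) := by
      rw [rpow_add_one hd.ne', show 2 * h / (d / (2 * (m + 1))) = 4 * (m + 1) * (h / d) by
        field_simp; ring, mul_pow]
      ring
    _ ≤ (4 * (m + 1)) ^ m * B * ((h / d) ^ (σ + 1) * d ^ (σ + 1)) := by gcongr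
    _ = (4 * (m + 1)) ^ m * B * h ^ (σ + 1) := by
      rw [← mul_rpow (by positivity) hd.le, div_mul_cancel₀ _ hd.ne']

lemma norm_fwdDiff_iter_mul_le (hg : HasLineExtension v r B σ g) (hv : ‖v‖ = 1) (hσ : 0 ≤ σ)
    (hm : σ + 1 ≤ m) (hh : 0 < h) :
    ‖Δ_[h • v] ^[m] g x‖ * (h + |r - ‖x‖|) ≤
      (2 * (4 * (m + 1)) ^ m + 2 ^ m * (3 * m + 2) ^ σ * (2 * m + 3)) * B * h ^ (σ + 1) := by
  have hB := hg.nonneg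
  rcases le_or_gt |r - ‖x‖| (2 * (m + 1) * h) with hx | hx
  · calc ‖Δ_[h • v] ^[m] g x‖ * (h + |r - ‖x‖|)
        ≤ 2 ^ m * (B * (2 * (m + 1) * h + m * h) ^ σ) * (h + 2 * (m + 1) * h) := by
          gcongr
          exact hg.norm_fwdDiff_iter_le hv hσ hh.le (by positivity) ((le_abs_self _).trans hx)
      _ = 2 ^ m * (3 * m + 2) ^ σ * (2 * m + 3) * B * h ^ (σ + 1) := by
          rw [show 2 * (m + 1) * h + m * h = (3 * m + 2) * h by ring,
            mul_rpow (by positivity) hh.le, rpow_add_one hh.ne']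
          ring
      _ ≤ _ := by
          gcongr
          exact le_add_of_nonneg_left (by positivity)
  rcases lt_abs.1 hx with hx' | hx'
  · have hdh : h ≤ r - ‖x‖ := by nlinarith [(m.cast_nonneg : (0 : ℝ) ≤ m)]
    rw [abs_of_pos (hh.trans_le hdh)]
    calc ‖Δ_[h • v] ^[m] g x‖ * (h + (r - ‖x‖))
        ≤ 2 * (‖Δ_[h • v] ^[m] g x‖ * (r - ‖x‖)) := by
          nlinarith [norm_nonneg (Δ_[h • v] ^[m] g x)]
      _ ≤ 2 * ((4 * (m + 1)) ^ m * B * h ^ (σ + 1)) := by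
          exact mul_le_mul_of_nonneg_left (hg.norm_fwdDiff_iter_mul_le_of_lt hm hh hx') two_pos.le
      _ ≤ _ := by
          rw [← mul_assoc, ← mul_assoc]
          gcongr
          exact le_add_of_nonneg_right (by positivity)
  · rw [hg.fwdDiff_iter_eq_zero hv hh.le (by nlinarith [(m.cast_nonneg : (0 : ℝ) ≤ m)]), norm_zero,
      zero_mul]
    positivity

lemma norm_le_indicator (hg : HasLineExtension v r B σ g) (hσ : 0 ≤ σ) (x : V) :
    ‖g x‖ ≤ (closedBall (0 : V) r).indicator (fun _ => B * r ^ σ) x := by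
  by_cases hx : ‖x‖ ≤ r
  · rw [indicator_of_mem (mem_closedBall_zero_iff.2 hx)]
    exact hg.norm_le_of_sub_norm_le hσ ((norm_nonneg x).trans hx) (by linarith [norm_nonneg x])
  · rw [indicator_of_notMem (by simpa using hx), hg.eq_zero (not_le.1 hx).le, norm_zero]

variable [MeasurableSpace V] {μ : Measure V}

lemma memLp [OpensMeasurableSpace V] [IsFiniteMeasureOnCompacts μ] [ProperSpace V]
    (hg : HasLineExtension v r B σ g) (hσ : 0 ≤ σ) (hgm : AEStronglyMeasurable g μ) (p : ℝ≥0∞) :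
    MemLp g p μ :=
  (memLp_indicator_const p measurableSet_closedBall _ (.inr measure_closedBall_lt_top.ne)).mono'
    hgm (.of_forall (hg.norm_le_indicator hσ))

variable [FiniteDimensional ℝ V] [BorelSpace V] [μ.IsAddHaarMeasure]

lemma lintegral_sq_le (hg : HasLineExtension v r B σ g) (hσ : 0 ≤ σ) (hr : 0 ≤ r) :
    ∫⁻ x, ‖g x‖ₑ ^ 2 ∂μ ≤ ENNReal.ofReal
      (μ.real (ball 0 1) * B ^ 2 * r ^ (2 * σ) * r ^ Module.finrank ℝ V) := by
  calc ∫⁻ x, ‖g x‖ₑ ^ 2 ∂μ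
      ≤ ∫⁻ x, (closedBall 0 r).indicator (fun _ => ENNReal.ofReal ((B * r ^ σ) ^ 2)) x ∂μ := by
        refine lintegral_mono fun x => ?_
        rw [← ofReal_norm, ← ENNReal.ofReal_pow (norm_nonneg _)]
        refine (ENNReal.ofReal_le_ofReal
          (pow_le_pow_left₀ (norm_nonneg _) (hg.norm_le_indicator hσ x) 2)).trans_eq ?_
        by_cases hx : x ∈ closedBall 0 r <;> simp [hx]
    _ = _ := by
        rw [lintegral_indicator_const measurableSet_closedBall, Measure.addHaar_closedBall _ _ hr,
          ← ofReal_measureReal, ← ENNReal.ofReal_mul (by positivity),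
          ← ENNReal.ofReal_mul (by positivity), mul_pow, mul_comm 2 σ, rpow_mul hr, rpow_two]
        ring_nf

lemma lintegral_fwdDiff_iter_sq_le_of_ge [Nontrivial V] (hg : HasLineExtension v r B σ g)
    (hσ : 0 ≤ σ) (hgm : AEStronglyMeasurable g μ) (hr : 0 < r) (hrh : r ≤ h) :
    ∫⁻ x, ‖Δ_[h • v] ^[m] g x‖ₑ ^ 2 ∂μ ≤ ENNReal.ofReal (4 ^ m * μ.real (ball 0 1) * B ^ 2 *
      r ^ (Module.finrank ℝ V - 1) * h ^ (2 * σ + 1)) := by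
  rw [← eLpNorm_two_sq]
  have := hg.nonneg
  calc eLpNorm (Δ_[h • v] ^[m] g) 2 μ ^ 2 ≤ (2 ^ m * eLpNorm g 2 μ) ^ 2 := by
        gcongr
        exact eLpNorm_fwdDiff_iter_le one_le_two hgm _ m
    _ = ENNReal.ofReal (4 ^ m) * ∫⁻ x, ‖g x‖ₑ ^ 2 ∂μ := by
        rw [mul_pow, eLpNorm_two_sq, ← pow_mul, mul_comm m, pow_mul, ENNReal.ofReal_pow (by simp)]
        norm_num
    _ ≤ ENNReal.ofReal (4 ^ m) * _ := mul_le_mul_right (hg.lintegral_sq_le hσ hr.le) _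
    _ = ENNReal.ofReal (4 ^ m * μ.real (ball 0 1) * B ^ 2 * r ^ (Module.finrank ℝ V - 1) *
          r ^ (2 * σ + 1)) := by
        rw [← ENNReal.ofReal_mul (by positivity), rpow_add_one hr.ne',
          ← mul_pow_sub_one Module.finrank_pos.ne']
        ring_nf
    _ ≤ _ := by
        gcongr

lemma lintegral_fwdDiff_iter_sq_le_of_le [Nontrivial V] (hg : HasLineExtension v r B σ g)
    (hv : ‖v‖ = 1) (hσ : 0 ≤ σ) (hm : σ + 1 ≤ m) (hh : 0 < h) (hhr : h ≤ r) :
    ∫⁻ x, ‖Δ_[h • v] ^[m] g x‖ₑ ^ 2 ∂μ ≤ ENNReal.ofReal (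
      (2 * (4 * (m + 1)) ^ m + 2 ^ m * (3 * m + 2) ^ σ * (2 * m + 3)) ^ 2 * Module.finrank ℝ V *
      μ.real (ball 0 1) * (m + 1) ^ (Module.finrank ℝ V - 1) * π * B ^ 2 *
      r ^ (Module.finrank ℝ V - 1) * h ^ (2 * σ + 1)) := by
  set c : ℝ := 2 * (4 * (m + 1)) ^ m + 2 ^ m * (3 * m + 2) ^ σ * (2 * m + 3)
  have hpt (x : V) : ‖Δ_[h • v] ^[m] g x‖ₑ ^ 2 ≤ (closedBall 0 ((m + 1) * r)).indicator
      (fun x => ENNReal.ofReal ((c * B * h ^ σ) ^ 2) *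
        ENNReal.ofReal (1 + ((‖x‖ - r) / h) ^ 2)⁻¹) x := by
    by_cases hx : ‖x‖ ≤ (m + 1) * r
    · rw [indicator_of_mem (mem_closedBall_zero_iff.2 hx), ← ofReal_norm,
        ← ENNReal.ofReal_pow (norm_nonneg _), ← ENNReal.ofReal_mul (by positivity)]
      refine ENNReal.ofReal_le_ofReal ?_
      have := hg.norm_fwdDiff_iter_mul_le (x := x) hv hσ hm hh
      rw [abs_sub_comm] at this
      refine sq_le_of_mul_add_abs_le (norm_nonneg _) hh (this.trans_eq ?_)
      rw [rpow_add_one hh.ne', mul_assoc _ (h ^ σ)]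
    · rw [hg.fwdDiff_iter_eq_zero hv hh.le]
      · simp
      · have : m * h ≤ m * r := by gcongr
        linarith
  calc ∫⁻ x, ‖Δ_[h • v] ^[m] g x‖ₑ ^ 2 ∂μ
      ≤ ENNReal.ofReal ((c * B * h ^ σ) ^ 2) *
          ∫⁻ x in closedBall 0 ((m + 1) * r), ENNReal.ofReal (1 + ((‖x‖ - r) / h) ^ 2)⁻¹ ∂μ := by
        refine (lintegral_mono hpt).trans_eq ?_
        rw [lintegral_indicator measurableSet_closedBall,
          lintegral_const_mul' _ _ ENNReal.ofReal_ne_top]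
    _ ≤ ENNReal.ofReal ((c * B * h ^ σ) ^ 2) * _ :=
        mul_le_mul_right (setLIntegral_closedBall_inv_one_add_sq_le μ r hh _) _
    _ = _ := by
        rw [← ENNReal.ofReal_mul (by positivity), rpow_add_one hh.ne', mul_comm 2 σ,
          rpow_mul hh.le, rpow_two, mul_pow _ r]
        ring_nf

lemma exists_lintegral_fwdDiff_iter_sq_le (μ : Measure V) [μ.IsAddHaarMeasure] (hσ : 0 ≤ σ)
    (hm : σ + 1 ≤ m) : ∃ C : ℝ, 0 ≤ C ∧ ∀ ⦃v : V⦄ ⦃r B h : ℝ⦄ ⦃g : V → ℂ⦄,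
      HasLineExtension v r B σ g → ‖v‖ = 1 → AEStronglyMeasurable g μ → 0 < r → 0 < h →
      ∫⁻ x, ‖Δ_[h • v] ^[m] g x‖ₑ ^ 2 ∂μ ≤
        ENNReal.ofReal (C * (B ^ 2 * r ^ (Module.finrank ℝ V - 1)) * h ^ (2 * σ + 1)) := by
  let c₁ : ℝ := (2 * (4 * (m + 1)) ^ m + 2 ^ m * (3 * m + 2) ^ σ * (2 * m + 3)) ^ 2 *
    Module.finrank ℝ V * μ.real (ball 0 1) * (m + 1) ^ (Module.finrank ℝ V - 1) * π
  let c₂ : ℝ := 4 ^ m * μ.real (ball 0 1)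
  refine ⟨max c₁ c₂, le_max_of_le_right (by positivity), fun v r B h g hg hv hgm hr hh => ?_⟩
  have : Nontrivial V := nontrivial_of_ne v 0 (norm_ne_zero_iff.1 (hv ▸ one_ne_zero))
  rcases le_total h r with hhr | hrh
  · refine (hg.lintegral_fwdDiff_iter_sq_le_of_le hv hσ hm hh hhr).trans
      (ENNReal.ofReal_le_ofReal ?_)
    rw [mul_assoc _ (B ^ 2)]
    gcongr
    exact le_max_left c₁ c₂
  · refine (hg.lintegral_fwdDiff_iter_sq_le_of_ge hσ hgm hr hrh).trans
      (ENNReal.ofReal_le_ofReal ?_)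
    rw [mul_assoc _ (B ^ 2)]
    gcongr
    exact le_max_right c₁ c₂

end HasLineExtension

end LineExtension

section BochnerRiesz

variable {V : Type*} [NormedAddCommGroup V] [InnerProductSpace ℝ V] {v x : V} {r R : ℝ} {z : ℂ}

lemma norm_cpow_le_exp_mul_rpow {w : ℂ} {M : ℝ} (hz : 0 ≤ z.re) (hw : ‖w‖ ≤ M) :
    ‖w ^ z‖ ≤ exp (π * |z.im|) * M ^ z.re := by
  refine (Complex.norm_cpow_le w z).trans ?_
  rw [div_eq_mul_inv, ← exp_neg, mul_comm]
  gcongr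
  refine (neg_le_abs _).trans ?_
  rw [abs_mul]
  gcongr
  exact Complex.abs_arg_le_pi w

lemma norm_two_mul_inner_add_sq_le (hv : ‖v‖ = 1) {w : ℂ} (hw : ‖w‖ < (r - ‖x‖) / 2) :
    ‖2 * w * ⟪x, v⟫_ℝ + w ^ 2‖ ≤ (r ^ 2 - ‖x‖ ^ 2) / 2 := by
  have hxv : |⟪x, v⟫_ℝ| ≤ ‖x‖ := by simpa [hv] using abs_real_inner_le_norm x v
  have hd : 0 ≤ (r - ‖x‖) / 2 := (norm_nonneg w).trans hw.le
  calc ‖2 * w * ⟪x, v⟫_ℝ + w ^ 2‖ ≤ ‖2 * w * ⟪x, v⟫_ℝ‖ + ‖w ^ 2‖ := norm_add_le _ _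
    _ = ‖w‖ * (2 * |⟪x, v⟫_ℝ| + ‖w‖) := by
      simp only [norm_mul, norm_pow, Complex.norm_real, norm_eq_abs, Complex.norm_two]
      ring
    _ ≤ (r - ‖x‖) / 2 * (2 * ‖x‖ + (r - ‖x‖) / 2) := by gcongr
    _ ≤ (r ^ 2 - ‖x‖ ^ 2) / 2 := by nlinarith [norm_nonneg x]

lemma hasLineExtension_cpow (hv : ‖v‖ = 1) (hR : 0 < R) (hz : 0 ≤ z.re) :
    HasLineExtension v r (exp (π * |z.im|) * (3 * |r| / R) ^ z.re) z.re
      fun x => if ‖x‖ < r then (((r ^ 2 - ‖x‖ ^ 2) / R : ℝ) : ℂ) ^ z else 0 where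
  nonneg := by positivity
  eq_zero x hx := if_neg hx.not_gt
  exists_extension x hx := by
    have hr : 0 < r := (norm_nonneg x).trans_lt hx
    set A := r ^ 2 - ‖x‖ ^ 2 with hA
    have hA₀ : 0 < A := sub_pos.2 (pow_lt_pow_left₀ hx (norm_nonneg x) two_ne_zero)
    let q (w : ℂ) : ℂ := (A - (2 * w * ⟪x, v⟫_ℝ + w ^ 2)) / R
    have hq {w : ℂ} (hw : w ∈ ball 0 ((r - ‖x‖) / 2)) : ‖2 * w * ⟪x, v⟫_ℝ + w ^ 2‖ ≤ A / 2 :=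
      norm_two_mul_inner_add_sq_le hv (mem_ball_zero_iff.1 hw)
    refine ⟨fun w => q w ^ z, fun w hw => ?_, fun w hw => ?_, fun t ht => ?_⟩
    · refine (DifferentiableAt.cpow_const (by fun_prop) (.inl ?_)).differentiableWithinAt
      rw [Complex.div_ofReal_re, Complex.sub_re, Complex.ofReal_re]
      have := (Complex.re_le_norm _).trans (hq hw)
      exact div_pos (by linarith) hR
    · rw [mul_assoc, ← mul_rpow (by positivity) (sub_pos.2 hx).le]
      refine norm_cpow_le_exp_mul_rpow hz ?_
      rw [norm_div, Complex.norm_of_nonneg hR.le, div_mul_eq_mul_div, abs_of_pos hr]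
      gcongr
      calc ‖(A : ℂ) - (2 * w * ⟪x, v⟫_ℝ + w ^ 2)‖ ≤ A + A / 2 := by
            refine (norm_sub_le _ _).trans (add_le_add ?_ (hq hw))
            rw [Complex.norm_of_nonneg hA₀.le]
        _ ≤ 3 * r * (r - ‖x‖) := by nlinarith
    · have hnorm : ‖x + t • v‖ ^ 2 = ‖x‖ ^ 2 + (2 * t * ⟪x, v⟫_ℝ + t ^ 2) := by
        rw [norm_add_sq_real, real_inner_smul_right, norm_smul, hv, mul_one, norm_eq_abs, sq_abs]
        ring
      have hlt : ‖x + t • v‖ < r := by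
        refine (norm_add_le _ _).trans_lt ?_
        rw [norm_smul, hv, mul_one, norm_eq_abs]
        linarith
      simp only [if_pos hlt, hnorm, q, hA]
      push_cast
      ring_nf

lemma sRz_eq_ite {l : ℕ} {ρ₀ : ℝ} (hR : ρ₀ ^ 2 < R) : sRz l ρ₀ R z = fun x =>
    if ‖x‖ < √(R - ρ₀ ^ 2) then (((√(R - ρ₀ ^ 2) ^ 2 - ‖x‖ ^ 2) / R : ℝ) : ℂ) ^ z else 0 := by
  have hR₀ : 0 < R := (sq_nonneg ρ₀).trans_lt hR
  funext x
  have hsymbol : 1 - (ρ₀ ^ 2 + ‖x‖ ^ 2) / R = (√(R - ρ₀ ^ 2) ^ 2 - ‖x‖ ^ 2) / R := by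
    rw [sq_sqrt (sub_nonneg.2 hR.le)]
    field_simp
    ring
  simp only [sRz, hsymbol, div_pos_iff_of_pos_right hR₀, sub_pos,
    pow_lt_pow_iff_left₀ (norm_nonneg x) (sqrt_nonneg _) two_ne_zero]

lemma hasLineExtension_sRz {l : ℕ} {ρ₀ : ℝ} {v : EuclideanSpace ℝ (Fin l)} (hv : ‖v‖ = 1)
    (hR : ρ₀ ^ 2 < R) (hz : 0 ≤ z.re) :
    HasLineExtension v √(R - ρ₀ ^ 2) (exp (π * |z.im|) * (3 * √(R - ρ₀ ^ 2) / R) ^ z.re) z.re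
      (sRz l ρ₀ R z) := by
  rw [sRz_eq_ite hR]
  simpa [abs_of_nonneg (sqrt_nonneg _)] using
    hasLineExtension_cpow (r := √(R - ρ₀ ^ 2)) hv ((sq_nonneg ρ₀).trans_lt hR) hz

lemma measurable_sRz (l : ℕ) (ρ₀ R : ℝ) (z : ℂ) : Measurable (sRz l ρ₀ R z) :=
  Measurable.ite (measurableSet_lt (by fun_prop) (by fun_prop)) (by fun_prop) measurable_const

end BochnerRiesz

section Tail

lemma sqrt_integral_sq_sum_le {α E ι : Type*} [MeasurableSpace α] {μ : Measure α}
    [NormedAddCommGroup E] {s : Finset ι} {f : ι → α → E} {c : ι → ℝ}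
    (hf : ∀ i ∈ s, AEStronglyMeasurable (f i) μ) (hc : ∀ i ∈ s, 0 ≤ c i)
    (h : ∀ i ∈ s, ∫⁻ x, ‖f i x‖ₑ ^ 2 ∂μ ≤ ENNReal.ofReal (c i ^ 2)) :
    √(∫ x, (∑ i ∈ s, ‖f i x‖) ^ 2 ∂μ) ≤ ∑ i ∈ s, c i := by
  have hsum : 0 ≤ ∑ i ∈ s, c i := Finset.sum_nonneg hc
  have hpiece (i) (hi : i ∈ s) : eLpNorm (fun x => ‖f i x‖) 2 μ ≤ ENNReal.ofReal (c i) := by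
    rw [eLpNorm_norm, ← ENNReal.pow_le_pow_left_iff two_ne_zero, eLpNorm_two_sq,
      ← ENNReal.ofReal_pow (hc i hi)]
    exact h i hi
  have hmink : eLpNorm (fun x => ∑ i ∈ s, ‖f i x‖) 2 μ ≤ ENNReal.ofReal (∑ i ∈ s, c i) := by
    have := eLpNorm_sum_le (fun i hi => (hf i hi).norm) one_le_two (p := 2)
    rw [ENNReal.ofReal_sum_of_nonneg hc]
    simpa [Finset.sum_fn] using this.trans (Finset.sum_le_sum hpiece)
  refine sqrt_le_iff.2 ⟨hsum, ?_⟩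
  rw [integral_eq_lintegral_of_nonneg_ae (.of_forall fun x => sq_nonneg _)
    ((Finset.aestronglyMeasurable_fun_sum s fun i hi => (hf i hi).norm).pow 2)]
  refine ENNReal.toReal_le_of_le_ofReal (sq_nonneg _) ?_
  rw [ENNReal.ofReal_pow hsum]
  refine (pow_le_pow_left₀ bot_le hmink 2).trans' (le_of_eq ?_)
  rw [eLpNorm_two_sq]
  congr with x
  rw [← enorm_pow, Real.enorm_of_nonneg (sq_nonneg _)]

variable {l : ℕ}

namespace HasLineExtension

variable {v : EuclideanSpace ℝ (Fin l)} {r B σ : ℝ} {g : EuclideanSpace ℝ (Fin l) → ℂ}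

lemma prod_I_mul_coord_mul (hg : HasLineExtension v r B σ g) (hv : ‖v‖ = 1) (hr : 0 ≤ r)
    (L : List (Fin l)) : HasLineExtension v r (r ^ L.length * B) σ
      fun x => (L.map fun i => Complex.I * x i).prod * g x := by
  induction L with
  | nil => simpa using hg
  | cons i L ih =>
    let φ : EuclideanSpace ℝ (Fin l) →ₗ[ℝ] ℂ :=
      Complex.I • (Complex.ofRealCLM ∘L EuclideanSpace.proj i).toLinearMap
    have hφ (y : EuclideanSpace ℝ (Fin l)) : ‖φ y‖ ≤ ‖y‖ := by
      simpa [φ] using PiLp.norm_apply_le y i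
    simpa [φ, pow_succ', mul_assoc] using ih.mul_left hv hr φ hφ

lemma integrable_norm_pow_mul (hg : HasLineExtension v r B σ g) (hσ : 0 ≤ σ)
    (hgm : AEStronglyMeasurable g) (n : ℕ) : Integrable fun x => ‖x‖ ^ n * ‖g x‖ := by
  have hint := memLp_one_iff_integrable.1 (hg.memLp hσ hgm 1)
  refine (hint.norm.const_mul (r ^ n)).mono' (by fun_prop) (.of_forall fun x => ?_)
  rw [norm_of_nonneg (by positivity)]
  rcases le_or_gt r ‖x‖ with hx | hx
  · simp [hg.eq_zero hx]
  · gcongr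

end HasLineExtension

lemma exists_setLIntegral_mderiv_invFT_le {σ : ℝ} (hσ : 0 ≤ σ) (L : List (Fin l)) :
    ∃ C : ℝ, 0 ≤ C ∧ ∀ ⦃r B a : ℝ⦄ ⦃g : EuclideanSpace ℝ (Fin l) → ℂ⦄,
      (∀ i, HasLineExtension (EuclideanSpace.single i 1) r B σ g) → AEStronglyMeasurable g →
      0 < r → 0 < a → ∫⁻ H in {H | a < ‖H‖}, ‖mderiv L (invFT l g) H‖ₑ ^ 2 ≤
        ENNReal.ofReal (C * ((r ^ L.length * B) ^ 2 * r ^ (l - 1)) * a ^ (-(2 * σ + 1))) := by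
  obtain ⟨C, hC, hΔ⟩ := HasLineExtension.exists_lintegral_fwdDiff_iter_sq_le
    (volume : Measure (EuclideanSpace ℝ (Fin l))) hσ
    (m := ⌈σ⌉₊ + 1) (by push_cast; linarith [Nat.le_ceil σ])
  rw [finrank_euclideanSpace_fin] at hΔ
  refine ⟨l * (((2 * π) ^ l)⁻¹ * (C * (2 * l) ^ (2 * σ + 1))), by positivity,
    fun r B a g hg hgm hr ha => ?_⟩
  rcases isEmpty_or_nonempty (Fin l) with hl | ⟨⟨i⟩⟩
  · have hempty : {H : EuclideanSpace ℝ (Fin l) | a < ‖H‖} = ∅ :=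
      eq_empty_of_forall_notMem fun H hH => ha.not_gt (by simpa [Subsingleton.elim H 0] using hH)
    simp [hempty]
  have hv (i : Fin l) : ‖(EuclideanSpace.single i 1 : EuclideanSpace ℝ (Fin l))‖ = 1 := by simp
  set gL := fun x : EuclideanSpace ℝ (Fin l) => (L.map fun i => Complex.I * x i).prod * g x
  have hgL (i) : HasLineExtension (EuclideanSpace.single i 1) r (r ^ L.length * B) σ gL :=
    (hg i).prod_I_mul_coord_mul (hv i) hr.le L
  have hgLm : AEStronglyMeasurable gL :=
    (continuous_list_prod L fun i _ => by fun_prop).aestronglyMeasurable.mul hgm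
  rw [mderiv_invFT hgm ((hg i).integrable_norm_pow_mul hσ hgm) L]
  refine (setLIntegral_invFT_norm_gt_le_of_fwdDiff_le
    (memLp_one_iff_integrable.1 ((hgL i).memLp hσ hgLm 1)) ((hgL i).memLp hσ hgLm 2)
    (by positivity) (by positivity)
    (fun i h hh => hΔ (hgL i) (hv i) hgLm hr hh) ha).trans_eq ?_
  rw [div_rpow (by positivity) ha.le, rpow_neg ha.le]
  ring_nf

lemma exists_setLIntegral_mderiv_invFT_sRz_le (L : List (Fin l)) {ρ₀ : ℝ} (hρ : 0 < ρ₀) {z : ℂ}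
    (hz : 0 ≤ z.re) (R₁ : ℝ) : ∃ C : ℝ, 0 ≤ C ∧ ∀ R, ρ₀ ^ 2 < R → R ≤ R₁ → ∀ a, 0 < a →
      ∫⁻ H in {H | a < ‖H‖}, ‖mderiv L (invFT l (sRz l ρ₀ R z)) H‖ₑ ^ 2 ≤
        ENNReal.ofReal ((C * a ^ (-z.re - 1 / 2)) ^ 2) := by
  obtain ⟨C, hC, htail⟩ := exists_setLIntegral_mderiv_invFT_le hz L
  set r₁ := √(R₁ - ρ₀ ^ 2)
  set B₁ := exp (π * |z.im|) * (3 * r₁ / ρ₀ ^ 2) ^ z.re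
  refine ⟨√(C * ((r₁ ^ L.length * B₁) ^ 2 * r₁ ^ (l - 1))), sqrt_nonneg _,
    fun R hR hR₁ a ha => ?_⟩
  have hR₀ : 0 < R := (sq_nonneg ρ₀).trans_lt hR
  have hr : √(R - ρ₀ ^ 2) ≤ r₁ := sqrt_le_sqrt (sub_le_sub_right hR₁ _)
  have hB : exp (π * |z.im|) * (3 * √(R - ρ₀ ^ 2) / R) ^ z.re ≤ B₁ := by
    simp only [B₁]
    gcongr
  refine (htail (fun i => hasLineExtension_sRz (by simp) hR hz)
    (measurable_sRz l ρ₀ R z).aestronglyMeasurable (sqrt_pos.2 (sub_pos.2 hR)) ha).trans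
    (ENNReal.ofReal_le_ofReal ?_)
  rw [mul_pow (√_), sq_sqrt (by positivity), ← rpow_mul_natCast ha.le,
    show (-z.re - 1 / 2) * (2 : ℕ) = -(2 * z.re + 1) by push_cast; ring]
  gcongr

end Tail

theorem invFT_sRz_L2_tail_smallR_general (l k : ℕ) (ρ₀ : ℝ) (hρ : 0 < ρ₀)
    (z : ℂ) (hz : 0 ≤ z.re) (R₁ : ℝ) :
    ∃ c : ℝ, 0 < c ∧ ∀ R : ℝ, ρ₀ ^ 2 < R → R ≤ R₁ → ∀ a : ℝ, 0 < a →
      Real.sqrt (∫ H in {H : EuclideanSpace ℝ (Fin l) | a < ‖H‖},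
          (∑ α ∈ Finset.univ.filter
              (fun α : Fin l → Fin (2 * k + 1) => (∑ i, (α i : ℕ)) ≤ 2 * k),
            ‖partialD (fun i => (α i : ℕ)) (invFT l (sRz l ρ₀ R z)) H‖) ^ 2) ≤
        c * a ^ (-z.re - 1 / 2) := by
  choose C hC hbound using fun L : List (Fin l) =>
    exists_setLIntegral_mderiv_invFT_sRz_le L hρ hz R₁
  let c (α : Fin l → Fin (2 * k + 1)) : ℝ :=
    C ((List.finRange l).flatMap fun i => List.replicate (α i) i)
  refine ⟨∑ α, c α + 1, add_pos_of_nonneg_of_pos (Finset.sum_nonneg fun α _ => hC _) one_pos,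
    fun R hR hR₁ a ha => ?_⟩
  have ha' : 0 ≤ a ^ (-z.re - 1 / 2) := rpow_nonneg ha.le _
  refine (sqrt_integral_sq_sum_le (c := fun α => c α * a ^ (-z.re - 1 / 2))
    (fun α _ => (measurable_mderiv (measurable_invFT (measurable_sRz l ρ₀ R z))
      _).aestronglyMeasurable)
    (fun α _ => mul_nonneg (hC _) ha') (fun α _ => hbound _ R hR hR₁ a ha)).trans ?_
  rw [← Finset.sum_mul]
  gcongr
  exact (Finset.sum_le_sum_of_subset_of_nonneg (Finset.filter_subset _ _)
    fun α _ _ => hC _).trans (le_add_of_nonneg_right zero_le_one)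

/-- L² tail estimate for sums of multi-index derivatives of ℱ^{−1}s_R^z, uniformly for
ρ₀² < R ≤ ρ₀² + 1 and a ≥ 1/2:
(∫_{‖H‖>a} (Σ_{|α|≤2k} |∂^α(ℱ^{−1}s_R^z)(H)|)² dH)^{1/2} ≤ c a^{−Re z − 1/2}. -/
theorem invFT_sRz_L2_tail_smallR (l k : ℕ) (hl : 1 ≤ l) (ρ₀ : ℝ) (hρ : 0 < ρ₀)
    (z : ℂ) (hz : 0 ≤ z.re) :
    ∃ c : ℝ, 0 < c ∧ ∀ R : ℝ, ρ₀ ^ 2 < R → R ≤ ρ₀ ^ 2 + 1 → ∀ a : ℝ, 1 / 2 ≤ a →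
      Real.sqrt (∫ H in {H : EuclideanSpace ℝ (Fin l) | a < ‖H‖},
          (∑ α ∈ Finset.univ.filter
              (fun α : Fin l → Fin (2 * k + 1) => (∑ i, (α i : ℕ)) ≤ 2 * k),
            ‖partialD (fun i => (α i : ℕ)) (invFT l (sRz l ρ₀ R z)) H‖) ^ 2) ≤
        c * a ^ (-z.re - 1 / 2) := by
  obtain ⟨c, hc, h⟩ := invFT_sRz_L2_tail_smallR_general l k ρ₀ hρ z hz (ρ₀ ^ 2 + 1)
  exact ⟨c, hc, fun R hR hR₁ a ha => h R hR hR₁ a (one_half_pos.trans_le ha)⟩
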